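/- Let E be a commutative monoid in which every element is idempotent (a unital meet-semilattice), and let X be the set of semicharacters of E. For e ∈ E define 1_e : X → ℂ by 1_e(φ) = φ(e). Then the family (1_e)_{e ∈ E} is linearly independent in ℂ^X: for pairwise distinct e₁, …, eₙ ∈ E and λ ∈ ℂⁿ, if Σᵢ λᵢ·1_{eᵢ} is the zero function on X then λ₁ = … = λₙ = 0. -/

import Mathlib

/-!
Order `E` by `e ≤ f ↔ f * e = e`. For each `a`, the indicator function of the principal filter
`{x | a ≤ x}` is a semicharacter, and evaluating the linear relation at these semicharacters gives a
unitriangular system: the coefficients above each `a` sum to zero. At a maximal element of the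
support of the coefficients that sum is a single nonzero term, so the support is empty.
-/

open Finset

theorem eq_zero_of_sum_filter_le_eq_zero {α M : Type*} [PartialOrder α] [DecidableLE α]
    [AddCommMonoid M] {s : Finset α} {c : α → M}
    (h : ∀ a ∈ s, ∑ b ∈ s with a ≤ b, c b = 0) : ∀ a ∈ s, c a = 0 := by
  classical
  by_contra! ⟨a₀, ha₀, hca₀⟩
  have support_nonempty : {a ∈ s | c a ≠ 0}.Nonempty := ⟨a₀, mem_filter.2 ⟨ha₀, hca₀⟩⟩
  obtain ⟨a, ha⟩ := exists_maximal support_nonempty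
  obtain ⟨has, hca⟩ := mem_filter.1 ha.prop
  have sum_eq : ∑ b ∈ s with a ≤ b, c b = c a := by
    refine sum_eq_single_of_mem a (mem_filter.2 ⟨has, le_rfl⟩) fun b hb hba ↦ ?_
    obtain ⟨hbs, hab⟩ := mem_filter.1 hb
    by_contra hcb
    exact hba (ha.eq_of_ge (mem_filter.2 ⟨hbs, hcb⟩) hab)
  exact hca (sum_eq.symm.trans (h a has))

/-- The meet-semilattice underlying a commutative semigroup of idempotents, with meet `e * f`; its
order is `e ≤ f ↔ f * e = e`. -/
abbrev semilatticeInfOfMulSelf {E : Type*} [CommSemigroup E] (hidem : ∀ e : E, e * e = e) :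
    SemilatticeInf E :=
  letI : Min E := ⟨(· * ·)⟩
  SemilatticeInf.mk' mul_comm mul_assoc hidem

/-- The principal semicharacter at `a`: the indicator function of the principal filter
`{x | a ≤ x}`, with values in `Bool`. -/
def principalSemicharacter {E : Type*} [LE E] [DecidableLE E] (a x : E) : Bool :=
  decide (a ≤ x)

theorem principalSemicharacter_eq_true_iff {E : Type*} [LE E] [DecidableLE E] {a x : E} :
    principalSemicharacter a x = true ↔ a ≤ x :=
  decide_eq_true_iff

theorem principalSemicharacter_inf {E : Type*} [SemilatticeInf E] [DecidableLE E] (a e f : E) :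
    principalSemicharacter a (e ⊓ f) =
      (principalSemicharacter a e && principalSemicharacter a f) := by
  simp only [principalSemicharacter, le_inf_iff, Bool.decide_and]

theorem stmt7_general {E ι M : Type*} [CommSemigroup E] (hidem : ∀ e : E, e * e = e)
    [Fintype ι] [AddCommMonoid M] {es : ι → E} (hes : Function.Injective es) {l : ι → M}
    (h : ∀ φ : E → Bool, (∃ e, φ e = true) → (∀ e f : E, φ (e * f) = (φ e && φ f)) →
      ∑ i with φ (es i) = true, l i = 0) :
    ∀ i, l i = 0 := by
  classical
  let _ : SemilatticeInf E := semilatticeInfOfMulSelf hidem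
  let _ : PartialOrder ι := PartialOrder.lift es hes
  have sum_above (i : ι) : ∑ j with i ≤ j, l j = 0 := by
    have vanish := h (principalSemicharacter (es i))
      ⟨es i, principalSemicharacter_eq_true_iff.2 le_rfl⟩ (principalSemicharacter_inf (es i))
    convert vanish using 3 with j
    exact principalSemicharacter_eq_true_iff.symm
  exact fun i ↦ eq_zero_of_sum_filter_le_eq_zero (fun i _ ↦ sum_above i) i (mem_univ i)

/-- For a unital meet-semilattice `E` (a commutative monoid of idempotents), the
projections `1_e : X → ℂ`, `1_e(φ) = φ(e)`, indexed by `e ∈ E`, are linearly independent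
as functions on the set `X` of semicharacters of `E`: any finite linear combination
`Σᵢ λᵢ·1_{eᵢ}` with pairwise distinct `eᵢ` that vanishes identically on `X` has all
coefficients zero. -/
theorem stmt7 {E : Type*} [CommMonoid E] (hidem : ∀ e : E, e * e = e)
    {n : ℕ} (es : Fin n → E) (hes : Function.Injective es) (l : Fin n → ℂ)
    (h : ∀ φ : E → Bool, φ 1 = true → (∀ e f : E, φ (e * f) = (φ e && φ f)) →
      ∑ i, l i * (if φ (es i) = true then (1 : ℂ) else 0) = 0) :
    ∀ i, l i = 0 := by
  refine stmt7_general hidem hes fun φ ⟨e, he⟩ hmul ↦ ?_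
  have map_one : φ 1 = true := by simpa [he] using hmul e 1
  simpa [sum_filter] using h φ map_one hmul
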